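/- Let K be a field with char K ≠ 2 and let H₁ ⊆ K* be a set such that every element of K* is ~₁-equivalent to exactly one element of H₁. Consider the list of algebras: S(0,1,1,0,−1,2); S(0,4,−4,−4,4,0); S(0,εt,t,0,δt,0) for t ∈ H₁ and ε, δ ∈ {1,−1}; and S(0,(1+t)²/4,(t²−1)/4,1,(1−t²)/4,t) for t ∈ K* with t ≠ 1 and t ≠ −1. Then: (1) every endo-commutative algebra S(0,q,a,b,c,d) over K with a ≠ 0 and c ≠ 0 is isomorphic to at least one algebra in this list; (2) any two algebras in the list with distinct parameter tuples (distinguishing the four families as well as distinct (t,ε,δ) or distinct t) are non-isomorphic. -/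

import Mathlib

/-- Multiplication of the 2-dimensional algebra `S(p,q,a,b,c,d)` on `K × K`,
with basis `e = (1,0)`, `f = (0,1)` and table
`e*e = f`, `f*f = p•e + q•f`, `e*f = a•e + b•f`, `f*e = c•e + d•f`. -/
def mulS {K : Type*} [Field K] (p q a b c d : K) (u v : K × K) : K × K :=
  (u.1 * v.2 * a + u.2 * v.1 * c + u.2 * v.2 * p,
   u.1 * v.1 + u.1 * v.2 * b + u.2 * v.1 * d + u.2 * v.2 * q)

/-- `S(p,q,a,b,c,d)` is endo-commutative: `(x*x)*(y*y) = (x*y)*(x*y)`. -/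
def EndoComm {K : Type*} [Field K] (p q a b c d : K) : Prop :=
  ∀ u v : K × K,
    mulS p q a b c d (mulS p q a b c d u u) (mulS p q a b c d v v) =
      mulS p q a b c d (mulS p q a b c d u v) (mulS p q a b c d u v)

/-- `S(p,q,a,b,c,d)` and `S(p',q',a',b',c',d')` are isomorphic: there is a bijective
`K`-linear map between them preserving multiplication. -/
def IsoS {K : Type*} [Field K] (p q a b c d p' q' a' b' c' d' : K) : Prop :=
  ∃ φ : (K × K) ≃ₗ[K] (K × K),
    ∀ u v : K × K,
      φ (mulS p q a b c d u v) = mulS p' q' a' b' c' d' (φ u) (φ v)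

/-- The relation `~₁` on `K*`: `t ~₁ t'` iff `t / t'` is the square of a nonzero
element. -/
def rel1 {K : Type*} [Field K] (t t' : K) : Prop := ∃ k : K, k ≠ 0 ∧ t / t' = k ^ 2

/-- The parameter tuples appearing in the classification list of
Theorem 7.1 (`char K ≠ 2`). -/
def InList1 {K : Type*} [Field K] (H₁ : Set K) (p q a b c d : K) : Prop :=
  (p, q, a, b, c, d) = ((0 : K), 1, 1, 0, -1, 2) ∨
  (p, q, a, b, c, d) = ((0 : K), 4, -4, -4, 4, 0) ∨
  (∃ t ∈ H₁, ∃ ε δ : K, (ε = 1 ∨ ε = -1) ∧ (δ = 1 ∨ δ = -1) ∧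
      (p, q, a, b, c, d) = ((0 : K), ε * t, t, 0, δ * t, 0)) ∨
  (∃ t : K, t ≠ 0 ∧ t ≠ 1 ∧ t ≠ -1 ∧
      (p, q, a, b, c, d) =
        ((0 : K), (1 + t) ^ 2 / 4, (t ^ 2 - 1) / 4, 1, (1 - t ^ 2) / 4, t))


/-- A lower triangular isomorphism. -/
theorem isoS_mk {K : Type*} [Field K] {q a b c d q' a' b' c' d' : K} (x y w : K)
    (hx : x ≠ 0) (hw : w ≠ 0) (hac : (a' + c') * (x * y) = 0)
    (hw' : w = x ^ 2 + (b' + d') * x * y + q' * y ^ 2)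
    (hq : q = w * q') (ha : a = w * a') (hc : c = w * c')
    (hb : a * y + b * w = x * w * b' + y * w * q')
    (hd : c * y + d * w = x * w * d' + y * w * q') :
    IsoS 0 q a b c d 0 q' a' b' c' d' := by
  refine ⟨{ toFun := fun u => (u.1 * x, u.1 * y + u.2 * w)
            invFun := fun v => (v.1 / x, (v.2 - v.1 / x * y) / w)
            map_add' := ?_
            map_smul' := ?_
            left_inv := ?_
            right_inv := ?_ }, ?_⟩
  · intro u v
    ext <;> simp <;> ring
  · intro r u
    ext <;> simp <;> ring
  · intro u
    ext <;> simp <;> field_simp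
    ring
  · intro u
    ext <;> simp <;> field_simp
    ring
  · rintro ⟨u1, u2⟩ ⟨v1, v2⟩
    simp only [mulS, LinearEquiv.coe_mk, LinearMap.coe_mk, AddHom.coe_mk, Prod.mk.injEq]
    constructor
    · rw [ha, hc]
      linear_combination (-u1 * v1) * hac
    · linear_combination (u1 * v1) * hw' + (u1 * v2) * hb + (u2 * v1) * hd + (u2 * v2 * w) * hq

theorem isoS_symm {K : Type*} [Field K] {p q a b c d p' q' a' b' c' d' : K}
    (h : IsoS p q a b c d p' q' a' b' c' d') : IsoS p' q' a' b' c' d' p q a b c d := by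
  obtain ⟨φ, h⟩ := h
  refine ⟨φ.symm, fun u v => ?_⟩
  apply φ.injective
  rw [h]
  simp

/-- The equations satisfied by the matrix of an isomorphism. -/
theorem isoS_eqs {K : Type*} [Field K] {q a b c d q' a' b' c' d' : K}
    (h : IsoS 0 q a b c d 0 q' a' b' c' d') :
    ∃ x y z w : K, x * w - y * z ≠ 0 ∧
      z = (a' + c') * (x * y) ∧ w = x ^ 2 + (b' + d') * x * y + q' * y ^ 2 ∧
      q * z = (a' + c') * (z * w) ∧ q * w = z ^ 2 + (b' + d') * z * w + q' * w ^ 2 ∧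
      a * x + b * z = x * w * a' + y * z * c' ∧
      a * y + b * w = x * z + x * w * b' + y * z * d' + y * w * q' ∧
      c * x + d * z = z * y * a' + w * x * c' ∧
      c * y + d * w = z * x + z * y * b' + w * x * d' + w * y * q' := by
  obtain ⟨φ, h⟩ := h
  have key : ∀ r s : K, φ (r, s) = r • φ (1, 0) + s • φ (0, 1) := by
    intro r s
    rw [← map_smul, ← map_smul, ← map_add]
    simp
  have h1 := h (1, 0) (1, 0)
  have h2 := h (0, 1) (0, 1)
  have h3 := h (1, 0) (0, 1)
  have h4 := h (0, 1) (1, 0)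
  rcases he : φ (1, 0) with ⟨x, y⟩
  rcases hf : φ (0, 1) with ⟨z, w⟩
  refine ⟨x, y, z, w, ?_, ?_⟩
  · intro hdet
    have i1 : φ (w, -y) = 0 := by
      rw [key, he, hf]
      ext <;> simp
      · linear_combination hdet
      · ring
    have i2 : φ (-z, x) = 0 := by
      rw [key, he, hf]
      ext <;> simp
      · ring
      · linear_combination hdet
    have j1 := φ.map_eq_zero_iff.mp i1
    have j2 := φ.map_eq_zero_iff.mp i2
    simp only [Prod.mk_eq_zero, neg_eq_zero] at j1 j2
    have i3 : φ (1, 0) = 0 := by rw [he, j1.2, j2.2]; rfl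
    have j3 := φ.map_eq_zero_iff.mp i3
    simp at j3
  · simp only [mulS, he, hf, key] at h1 h2 h3 h4
    simp only [he, hf, Prod.smul_mk, Prod.mk_add_mk, smul_eq_mul, Prod.mk.injEq] at h1 h2 h3 h4
    refine ⟨?_, ?_, ?_, ?_, ?_, ?_, ?_, ?_⟩
    · linear_combination h1.1
    · linear_combination h1.2
    · linear_combination h2.1
    · linear_combination h2.2
    · linear_combination h3.1
    · linear_combination h3.2
    · linear_combination h4.1
    · linear_combination h4.2

/-- Isomorphisms onto an algebra whose two mixed e-coefficients are opposite. -/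
theorem isoS_anti {K : Type*} [Field K] {q a b c d q' a' b' c' d' : K} (hc' : c' = -a')
    (h : IsoS 0 q a b c d 0 q' a' b' c' d') :
    ∃ x y w : K, x ≠ 0 ∧ w ≠ 0 ∧ w = x ^ 2 + (b' + d') * x * y + q' * y ^ 2 ∧
      q = w * q' ∧ a = w * a' ∧ c = - a ∧
      b = x * b' + y * (q' - a') ∧ d = x * d' + y * (q' + a') := by
  obtain ⟨x, y, z, w, hdet, h1, h2, h3, h4, h5, h6, h7, h8⟩ := isoS_eqs h
  subst hc'
  have hz : z = 0 := by rw [h1]; ring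
  subst hz
  have hx : x ≠ 0 := by rintro rfl; simp at hdet
  have hw : w ≠ 0 := by intro hw; simp [hw] at hdet
  have ha : a = w * a' := mul_right_cancel₀ hx (by linear_combination h5)
  have hc : c = - (w * a') := mul_right_cancel₀ hx (by linear_combination h7)
  refine ⟨x, y, w, hx, hw, h2, mul_right_cancel₀ hw (by linear_combination h4), ha,
    by rw [hc, ha], mul_right_cancel₀ hw ?_, mul_right_cancel₀ hw ?_⟩
  · linear_combination h6 - y * ha
  · linear_combination h8 - y * hc

/-- Consequences of endo-commutativity. -/
theorem endo_cases {K : Type*} [Field K] (h2 : (2 : K) ≠ 0) {q a b c d : K}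
    (ha : a ≠ 0) (h : EndoComm 0 q a b c d) :
    (c = a ∧ b = 0 ∧ d = 0 ∧ (q = a ∨ q = -a)) ∨
    (c = -a ∧ b = 0 ∧ q = a) ∨ (c = -a ∧ d = 0 ∧ q = -a) ∨
    (c = -a ∧ b ≠ 0 ∧ d ≠ 0 ∧ q = (b + d) ^ 2 / 4 ∧ a = (d ^ 2 - b ^ 2) / 4) := by
  have e1 := h (1, 0) (0, 1)
  have e2 := h (0, 1) (1, 0)
  have e3 := h (1, 0) (1, 1)
  simp only [mulS, Prod.mk.injEq] at e1 e2 e3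
  obtain ⟨e11, e12⟩ := e1
  obtain ⟨e21, e22⟩ := e2
  obtain ⟨e31, e32⟩ := e3
  have f1 : a * b * (a + c) = 0 := by linear_combination -e11
  have f2 : a ^ 2 + a * b * (b + d) + b ^ 2 * q = q ^ 2 := by linear_combination -e12
  have f3 : c * d * (a + c) = 0 := by linear_combination -e21
  have f4 : c ^ 2 + c * d * (b + d) + d ^ 2 * q = q ^ 2 := by linear_combination -e22
  have f5 : (c - a) * (c + a) = 0 := by linear_combination e31 - e11
  have f6 : c * d + d * q = a * b + b * q := by linear_combination e32 - e12
  clear e11 e12 e21 e22 e31 e32 h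
  have h4 : (4 : K) ≠ 0 := by
    have : (4 : K) = 2 * 2 := by norm_num
    rw [this]; exact mul_ne_zero h2 h2
  have sq : b = 0 ∨ d = 0 → c = -a ∨ c = a → (b = 0 ∧ d = 0) ∨ c = -a → q = a ∨ q = -a := by
    intro hbd hc hc2
    have : (q - a) * (q + a) = 0 := by
      rcases hbd with rfl | rfl
      · linear_combination -f2
      · linear_combination -f4 + f5
    rcases mul_eq_zero.mp this with k | k
    · left; linear_combination k
    · right; linear_combination k
  rcases mul_eq_zero.mp f5 with hc | hc
  · left
    have hc : c = a := by linear_combination hc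
    subst hc
    have hb : b = 0 := by grind
    have hd : d = 0 := by grind
    exact ⟨rfl, hb, hd, sq (Or.inl hb) (Or.inr rfl) (Or.inl ⟨hb, hd⟩)⟩
  · right
    have hc : c = -a := by linear_combination hc
    subst hc
    by_cases hb : b = 0
    · rcases sq (Or.inl hb) (Or.inl rfl) (Or.inr rfl) with k | k
      · exact Or.inl ⟨rfl, hb, k⟩
      · have hd : d = 0 := by grind
        exact Or.inr (Or.inl ⟨rfl, hd, k⟩)
    by_cases hd : d = 0
    · rcases sq (Or.inr hd) (Or.inl rfl) (Or.inr rfl) with k | k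
      · grind
      · exact Or.inr (Or.inl ⟨rfl, hd, k⟩)
    right; right
    have g : (q - a) * d = (q + a) * b := by linear_combination f6
    have hs : b + d ≠ 0 := by
      intro hs
      have hd' : d = -b := by linear_combination hs
      subst hd'
      have : 2 * b * q = 0 := by linear_combination -g
      have hq : q = 0 := by simpa [h2, hb] using this
      subst hq
      have : a ^ 2 = 0 := by linear_combination f2
      exact ha (by simpa using this)
    have hq : q ≠ 0 := by
      rintro rfl
      have : a * (b + d) = 0 := by linear_combination -g
      exact (mul_ne_zero ha hs) this
    have hA : a * (b + d) = (d - b) * q := by linear_combination -g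
    have k : (b * d * q) * ((b + d) ^ 2 - 4 * q) = 0 := by
      linear_combination (b + d) ^ 2 * f2 - (a * (b + d) + (d - b) * q + b * (b + d) ^ 2) * hA
    have k2 : (b + d) ^ 2 - 4 * q = 0 := by
      simpa [hb, hd, hq] using k
    have hq' : q = (b + d) ^ 2 / 4 := by
      field_simp; linear_combination -k2
    refine ⟨rfl, hb, hd, hq', mul_right_cancel₀ hs ?_⟩
    rw [hA, hq']; ring

/-- The commutative members of the third family. -/
theorem comm_case {K : Type*} [Field K] (h2 : (2 : K) ≠ 0) {t t' ε ε' : K} (ht : t ≠ 0)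
    (ht' : t' ≠ 0) (hε : ε = 1 ∨ ε = -1) (hε' : ε' = 1 ∨ ε' = -1)
    (h : IsoS 0 (ε * t) t 0 t 0 0 (ε' * t') t' 0 t' 0) :
    ε = ε' ∧ ∃ x : K, x ≠ 0 ∧ t = t' * x ^ 2 := by
  obtain ⟨x, y, z, w, hdet, h1, hw, h3, h4, h5, h6, -, -⟩ := isoS_eqs h
  by_cases hx : x = 0
  · subst hx
    simp at h1
    subst h1
    simp at hdet
  by_cases hy : y = 0
  · subst hy
    have hz : z = 0 := by rw [h1]; ring
    subst hz
    have hw2 : w = x ^ 2 := by rw [hw]; ring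
    have e : t = t' * x ^ 2 := mul_right_cancel₀ hx (by rw [← hw2]; linear_combination h5)
    refine ⟨?_, x, hx, e⟩
    have hw0 : w ≠ 0 := by rw [hw2]; exact pow_ne_zero 2 hx
    have : ε * t = ε' * t := mul_right_cancel₀ hw0 (by rw [e, ← hw2]; rw [e, ← hw2] at h4; linear_combination h4)
    exact mul_right_cancel₀ ht this
  have hz : z ≠ 0 := by
    rw [h1]
    have : t' + t' = 2 * t' := by ring
    rw [this]
    exact mul_ne_zero (mul_ne_zero h2 ht') (mul_ne_zero hx hy)
  have q1 : ε * t = 2 * t' * w := mul_right_cancel₀ hz (by linear_combination h3)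
  have q2 : t = t' * w + 2 * t' ^ 2 * y ^ 2 :=
    mul_right_cancel₀ hx (by rw [h1] at h5; linear_combination h5)
  have q3 : t = 2 * t' * x ^ 2 + ε' * t' * w :=
    mul_right_cancel₀ hy (by rw [h1] at h6; linear_combination h6)
  rcases hε' with rfl | rfl
  · exfalso
    have : t' * (2 * (x * w - y * z)) = 0 := by
      rw [h1]; linear_combination x * q2 - x * q3 + 2 * t' * x * hw
    exact mul_ne_zero ht' (mul_ne_zero h2 hdet) this
  · have q4 : 3 * w ^ 2 * t' = z ^ 2 := by linear_combination h4 - w * q1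
    have q5 : t' * ((3 * w - 2 * x ^ 2) * (w + 2 * x ^ 2)) = 0 := by
      rw [h1] at q4
      linear_combination q4 + 4 * t' * x ^ 2 * hw
    have q5 := (mul_eq_zero.mp q5).resolve_left ht'
    rcases mul_eq_zero.mp q5 with k | k
    · exfalso
      have k3 : 3 * (x * w - y * z) = 0 := by
        rw [h1]; linear_combination 3 * x * k - 6 * x * hw
      have k3 := (mul_eq_zero.mp k3).resolve_right hdet
      have : 2 * x ^ 2 = 0 := by linear_combination w * k3 - k
      exact mul_ne_zero h2 (pow_ne_zero 2 hx) this
    · have e : t = t' * (2 * x) ^ 2 := by linear_combination q3 - t' * k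
      refine ⟨mul_right_cancel₀ ht ?_, 2 * x, mul_ne_zero h2 hx, e⟩
      linear_combination 2 * t' * k + q1 + 1 * e

/-- Part (1) of the classification. -/
theorem exists_iso {K : Type*} [Field K] (h2 : (2 : K) ≠ 0)
    (H₁ : Set K) (hH₁0 : ∀ s ∈ H₁, s ≠ 0)
    (hH₁ : ∀ t : K, t ≠ 0 → ∃! s, s ∈ H₁ ∧ rel1 t s) (q a b c d : K) (ha : a ≠ 0)
    (h : EndoComm 0 q a b c d) :
    ∃ p' q' a' b' c' d' : K, InList1 H₁ p' q' a' b' c' d' ∧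
          IsoS 0 q a b c d p' q' a' b' c' d' := by
  have h4 : (4 : K) ≠ 0 := by
    have : (4 : K) = 2 * 2 := by norm_num
    rw [this]; exact mul_ne_zero h2 h2
  have rep : ∀ r : K, r ≠ 0 → ∃ t ∈ H₁, t ≠ 0 ∧ ∃ k : K, k ≠ 0 ∧ r = t * k ^ 2 := by
    intro r hr
    obtain ⟨t, ⟨ht, k, hk, e⟩, -⟩ := hH₁ r hr
    refine ⟨t, ht, hH₁0 t ht, k, hk, ?_⟩
    have := hH₁0 t ht
    rw [← e]; field_simp
  rcases endo_cases h2 ha h with ⟨rfl, rfl, rfl, hq⟩ | ⟨rfl, rfl, rfl⟩ | ⟨rfl, rfl, rfl⟩ |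
    ⟨rfl, hb, hd, hq, hA⟩
  · obtain ⟨t, ht, ht0, k, hk, e⟩ := rep c ha
    obtain ⟨ε, hε, hqε⟩ : ∃ ε : K, (ε = 1 ∨ ε = -1) ∧ q = ε * c := by
      rcases hq with hq | hq
      · exact ⟨1, Or.inl rfl, by rw [hq]; ring⟩
      · exact ⟨-1, Or.inr rfl, by rw [hq]; ring⟩
    refine ⟨0, ε * t, t, 0, 1 * t, 0,
      Or.inr (Or.inr (Or.inl ⟨t, ht, ε, 1, hε, Or.inl rfl, rfl⟩)), ?_⟩
    refine isoS_mk k 0 (k ^ 2) hk (pow_ne_zero 2 hk) ?_ ?_ ?_ ?_ ?_ ?_ ?_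
    · ring
    · ring
    · rw [hqε, e]; ring
    · rw [e]; ring
    · rw [e]; ring
    · ring
    · ring
  · by_cases hD : q - d ^ 2 / 4 = 0
    · refine ⟨0, 1, 1, 0, -1, 2, Or.inl rfl, ?_⟩
      have e : q = (d / 2) ^ 2 := by
        have : (d / 2) ^ 2 = d ^ 2 / 4 := by rw [div_pow]; norm_num
        rw [this]; linear_combination hD
      have hk : d / 2 ≠ 0 := by
        intro hk; rw [hk] at e; apply ha; rw [e]; ring
      have hdd : d = 2 * (d / 2) := by field_simp
      refine isoS_mk (d / 2) 0 ((d / 2) ^ 2) hk (pow_ne_zero 2 hk) ?_ ?_ ?_ ?_ ?_ ?_ ?_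
      · ring
      · ring
      · rw [← e]; ring
      · rw [← e]; ring
      · rw [← e]; ring
      · ring
      · linear_combination (d / 2) ^ 2 * hdd
    · obtain ⟨t, ht, ht0, k, hk, e⟩ := rep _ hD
      refine ⟨0, 1 * t, t, 0, -1 * t, 0,
        Or.inr (Or.inr (Or.inl ⟨t, ht, 1, -1, Or.inl rfl, Or.inr rfl, rfl⟩)), ?_⟩
      have hy : 2 * t * (d / (2 * t)) = d := by field_simp
      have hq' : q = (k ^ 2 + t * (d / (2 * t)) ^ 2) * t := by
        field_simp at e ⊢
        linear_combination e
      generalize d / (2 * t) = y at hy hq'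
      refine isoS_mk k y (k ^ 2 + t * y ^ 2) hk ?_ ?_ ?_ ?_ ?_ ?_ ?_ ?_
      · intro h0; rw [h0] at hq'; apply ha; rw [hq']; ring
      · ring
      · ring
      · linear_combination hq'
      · linear_combination hq'
      · linear_combination -hq'
      · linear_combination y * hq'
      · linear_combination -y * hq' - (k ^ 2 + t * y ^ 2) * hy
  · by_cases hD : a + b ^ 2 / 4 = 0
    · refine ⟨0, 4, -4, -4, 4, 0, Or.inr (Or.inl rfl), ?_⟩
      obtain ⟨k, rfl⟩ : ∃ k, b = -4 * k := ⟨-b / 4, by field_simp⟩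
      have e : a = -4 * k ^ 2 := by
        field_simp at hD
        linear_combination hD
      have hk : k ≠ 0 := by
        rintro rfl; apply ha; rw [e]; ring
      refine isoS_mk k 0 (k ^ 2) hk (pow_ne_zero 2 hk) ?_ ?_ ?_ ?_ ?_ ?_ ?_
      · ring
      · ring
      · rw [e]; ring
      · rw [e]; ring
      · rw [e]; ring
      · ring
      · ring
    · obtain ⟨t, ht, ht0, k, hk, e⟩ := rep _ hD
      refine ⟨0, -1 * t, t, 0, -1 * t, 0,
        Or.inr (Or.inr (Or.inl ⟨t, ht, -1, -1, Or.inr rfl, Or.inr rfl, rfl⟩)), ?_⟩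
      have hy : 2 * t * (-b / (2 * t)) = -b := by field_simp
      have hq' : a = (k ^ 2 - t * (-b / (2 * t)) ^ 2) * t := by
        field_simp at e ⊢
        linear_combination e
      generalize -b / (2 * t) = y at hy hq'
      refine isoS_mk k y (k ^ 2 - t * y ^ 2) hk ?_ ?_ ?_ ?_ ?_ ?_ ?_ ?_
      · intro h0; rw [h0] at hq'; apply ha; rw [hq']; ring
      · ring
      · ring
      · linear_combination -hq'
      · linear_combination hq'
      · linear_combination -hq'
      · linear_combination y * hq' + (k ^ 2 - t * y ^ 2) * hy
      · linear_combination -y * hq'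
  · obtain ⟨t, rfl⟩ : ∃ t, d = t * b := ⟨d / b, by field_simp⟩
    have ht : t ≠ 0 := by rintro rfl; simp at hd
    have ht1 : t ≠ 1 := by rintro rfl; apply ha; rw [hA]; ring
    have ht2 : t ≠ -1 := by rintro rfl; apply ha; rw [hA]; ring
    refine ⟨0, _, _, _, _, _, Or.inr (Or.inr (Or.inr ⟨t, ht, ht1, ht2, rfl⟩)), ?_⟩
    refine isoS_mk b 0 (b ^ 2) hb (pow_ne_zero 2 hb) ?_ ?_ ?_ ?_ ?_ ?_ ?_
    · ring
    · ring
    · rw [hq]; ring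
    · rw [hA]; ring
    · rw [hA]; ring
    · ring
    · ring

/-- Members of the list with `c = -a`: distinct ones are not isomorphic. -/
theorem anti_unique {K : Type*} [Field K] (h2 : (2 : K) ≠ 0)
    (H₁ : Set K) (hu : ∀ s ∈ H₁, ∀ t ∈ H₁, ∀ x : K, x ≠ 0 → s = t * x ^ 2 → s = t)
    (hH₁0 : ∀ s ∈ H₁, s ≠ 0)
    {q a b c d q' a' b' c' d' : K} (hc : c = -a) (hc' : c' = -a')
    (h1 : InList1 H₁ 0 q a b c d) (h1' : InList1 H₁ 0 q' a' b' c' d')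
    (h : IsoS 0 q a b c d 0 q' a' b' c' d') :
    q = q' ∧ a = a' ∧ b = b' ∧ d = d' := by
  have h4 : (4 : K) ≠ 0 := by
    have : (4 : K) = 2 * 2 := by norm_num
    rw [this]; exact mul_ne_zero h2 h2
  have form : ∀ {q a b c d : K}, c = -a → InList1 H₁ 0 q a b c d →
      (q = 1 ∧ a = 1 ∧ b = 0 ∧ d = 2) ∨ (q = 4 ∧ a = -4 ∧ b = -4 ∧ d = 0) ∨
      (a ∈ H₁ ∧ b = 0 ∧ d = 0 ∧ (q = a ∨ q = -a)) ∨
      (∃ t : K, t ≠ 0 ∧ t ≠ 1 ∧ t ≠ -1 ∧ q = (1 + t) ^ 2 / 4 ∧ a = (t ^ 2 - 1) / 4 ∧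
        b = 1 ∧ t = d) := by
    intro q a b c d hc h
    rcases h with h | h | ⟨t, ht, ε, δ, hε, hδ, h⟩ | ⟨t, ht, ht1, ht2, h⟩
    · simp only [Prod.mk.injEq] at h
      tauto
    · simp only [Prod.mk.injEq] at h
      tauto
    · simp only [Prod.mk.injEq] at h
      obtain ⟨-, hq, rfl, hb, -, hd⟩ := h
      right; right; left
      refine ⟨ht, hb, hd, ?_⟩
      rcases hε with rfl | rfl
      · left; rw [hq]; ring
      · right; rw [hq]; ring
    · simp only [Prod.mk.injEq] at h
      obtain ⟨-, hq, ha, hb, -, hd⟩ := h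
      exact Or.inr (Or.inr (Or.inr ⟨t, ht, ht1, ht2, hq, ha, hb, hd.symm⟩))
  obtain ⟨x', y', w', hx', hw', hw2', -, -, -, hb', hd'⟩ := isoS_anti hc (isoS_symm h)
  obtain ⟨x, y, w, hx, hw, hw2, hq, ha, -, hb, hd⟩ := isoS_anti hc' h
  have ratio : q * a' = q' * a := by rw [hq, ha]; ring
  have f4 : ∀ t u s : K, t ≠ 0 → t ≠ 1 → t ≠ -1 → u ≠ 0 → (s = u ∨ s = -u) →
      (1 + t) ^ 2 / 4 * u = s * ((t ^ 2 - 1) / 4) → False := by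
    intro t u s ht ht1 ht2 hu0 hs he
    have ht2' : 1 + t ≠ 0 := fun h0 => ht2 (by linear_combination h0)
    field_simp at he
    rcases hs with rfl | rfl
    · have : 2 * (1 + t) * s = 0 := by linear_combination he
      exact mul_ne_zero (mul_ne_zero h2 ht2') hu0 this
    · have : 2 * t * (1 + t) * u = 0 := by linear_combination he
      exact mul_ne_zero (mul_ne_zero (mul_ne_zero h2 ht) ht2') hu0 this
  have two : (2 : K) * 2 ≠ 0 := mul_ne_zero h2 h2
  rcases form hc h1 with ⟨rfl, rfl, rfl, rfl⟩ | ⟨rfl, rfl, rfl, rfl⟩ | ⟨hm, rfl, rfl, hs⟩ |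
    ⟨t, ht, ht1, ht2, rfl, rfl, rfl, rfl⟩ <;>
  rcases form hc' h1' with ⟨rfl, rfl, rfl, rfl⟩ | ⟨rfl, rfl, rfl, rfl⟩ | ⟨hm', rfl, rfl, hs'⟩ |
    ⟨t', ht', ht1', ht2', rfl, rfl, rfl, rfl⟩
  · exact ⟨rfl, rfl, rfl, rfl⟩
  · exfalso
    exact mul_ne_zero h2 h4 (by linear_combination -ratio)
  · exfalso
    have := hH₁0 _ hm'
    rcases hs' with rfl | rfl
    · have e : 2 * (x' + y') = 0 := by linear_combination -hd'
      have e := (mul_eq_zero.mp e).resolve_left h2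
      exact hw' (by linear_combination hw2' + (x' + y') * e)
    · exact mul_ne_zero h2 this (by linear_combination ratio)
  · exact (f4 t' 1 1 ht' ht1' ht2' one_ne_zero (Or.inl rfl) (by linear_combination -ratio)).elim
  · exfalso
    exact mul_ne_zero h2 h4 (by linear_combination ratio)
  · exact ⟨rfl, rfl, rfl, rfl⟩
  · exfalso
    have := hH₁0 _ hm'
    rcases hs' with rfl | rfl
    · exact mul_ne_zero (mul_ne_zero h2 h4) this (by linear_combination ratio)
    · have e : 4 * (x' - 2 * y') = 0 := by linear_combination hb'
      have e := (mul_eq_zero.mp e).resolve_left h4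
      exact hw' (by linear_combination hw2' + (x' - 2 * y') * e)
  · exact (f4 t' (-4) 4 ht' ht1' ht2' (neg_ne_zero.mpr h4) (Or.inr (by ring))
      (by linear_combination -ratio)).elim
  · exfalso
    have := hH₁0 _ hm
    rcases hs with rfl | rfl
    · have e : 2 * (x + y) = 0 := by linear_combination -hd
      have e := (mul_eq_zero.mp e).resolve_left h2
      exact hw (by linear_combination hw2 + (x + y) * e)
    · exact mul_ne_zero h2 this (by linear_combination -ratio)
  · exfalso
    have := hH₁0 _ hm
    rcases hs with rfl | rfl
    · exact mul_ne_zero (mul_ne_zero h2 h4) this (by linear_combination -ratio)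
    · have e : 4 * (x - 2 * y) = 0 := by linear_combination hb
      have e := (mul_eq_zero.mp e).resolve_left h4
      exact hw (by linear_combination hw2 + (x - 2 * y) * e)
  · have n := hH₁0 _ hm
    have n' := hH₁0 _ hm'
    have hy : y = 0 := by
      rcases hs' with rfl | rfl
      · have : 2 * q' * y = 0 := by linear_combination -hd
        exact (mul_eq_zero.mp this).resolve_left (mul_ne_zero h2 n')
      · have : 2 * a' * y = 0 := by linear_combination hb
        exact (mul_eq_zero.mp this).resolve_left (mul_ne_zero h2 n')
    subst hy
    have e : a = a' := hu _ hm _ hm' x hx (by rw [ha, hw2]; ring)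
    subst e
    exact ⟨mul_right_cancel₀ n ratio, rfl, rfl, rfl⟩
  · exact (f4 t' a q ht' ht1' ht2' (hH₁0 _ hm) hs (by linear_combination -ratio)).elim
  · exact (f4 t 1 1 ht ht1 ht2 one_ne_zero (Or.inl rfl) (by linear_combination ratio)).elim
  · exact (f4 t (-4) 4 ht ht1 ht2 (neg_ne_zero.mpr h4) (Or.inr (by ring))
      (by linear_combination ratio)).elim
  · exact (f4 t a' q' ht ht1 ht2 (hH₁0 _ hm') hs' (by linear_combination ratio)).elim
  · have e1 : 1 + t ≠ 0 := fun h0 => ht2 (by linear_combination h0)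
    have e2 : 1 + t' ≠ 0 := fun h0 => ht2' (by linear_combination h0)
    have e3 : 2 * (1 + t) * (1 + t') * (t - t') = 0 := by
      field_simp at ratio
      linear_combination -ratio
    have e4 := (mul_eq_zero.mp e3).resolve_left (mul_ne_zero (mul_ne_zero h2 e1) e2)
    have e5 : t = t' := by linear_combination e4
    subst e5
    exact ⟨rfl, rfl, rfl, rfl⟩

/-- Dichotomy `c = -a` or commutative in the list. -/
theorem inList_form {K : Type*} [Field K] {H₁ : Set K} {p q a b c d : K}
    (h : InList1 H₁ p q a b c d) :
    p = 0 ∧ (c = -a ∨ (c = a ∧ a ∈ H₁ ∧ b = 0 ∧ d = 0 ∧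
      ∃ ε : K, (ε = 1 ∨ ε = -1) ∧ q = ε * a)) := by
  rcases h with h | h | ⟨t, ht, ε, δ, hε, hδ, h⟩ | ⟨t, ht, ht1, ht2, h⟩
  · simp only [Prod.mk.injEq] at h
    obtain ⟨rfl, rfl, rfl, rfl, rfl, rfl⟩ := h
    simp
  · simp only [Prod.mk.injEq] at h
    obtain ⟨rfl, rfl, rfl, rfl, rfl, rfl⟩ := h
    simp
  · simp only [Prod.mk.injEq] at h
    obtain ⟨rfl, rfl, rfl, rfl, rfl, rfl⟩ := h
    refine ⟨rfl, ?_⟩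
    rcases hδ with rfl | rfl
    · right
      exact ⟨by ring, ht, rfl, rfl, ε, hε, rfl⟩
    · left; ring
  · simp only [Prod.mk.injEq] at h
    obtain ⟨rfl, rfl, rfl, rfl, rfl, rfl⟩ := h
    refine ⟨rfl, Or.inl ?_⟩
    ring

theorem classification_II1_char_ne_two {K : Type*} [Field K] (h2 : (2 : K) ≠ 0)
    (H₁ : Set K) (hH₁0 : ∀ s ∈ H₁, s ≠ 0)
    (hH₁ : ∀ t : K, t ≠ 0 → ∃! s, s ∈ H₁ ∧ rel1 t s) :
    (∀ q a b c d : K, a ≠ 0 → c ≠ 0 → EndoComm 0 q a b c d →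
        ∃ p' q' a' b' c' d' : K, InList1 H₁ p' q' a' b' c' d' ∧
          IsoS 0 q a b c d p' q' a' b' c' d') ∧
    (∀ p₁ q₁ a₁ b₁ c₁ d₁ p₂ q₂ a₂ b₂ c₂ d₂ : K,
        InList1 H₁ p₁ q₁ a₁ b₁ c₁ d₁ → InList1 H₁ p₂ q₂ a₂ b₂ c₂ d₂ →
        (p₁, q₁, a₁, b₁, c₁, d₁) ≠ (p₂, q₂, a₂, b₂, c₂, d₂) →
        ¬ IsoS p₁ q₁ a₁ b₁ c₁ d₁ p₂ q₂ a₂ b₂ c₂ d₂) := by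
  have hu : ∀ s ∈ H₁, ∀ t ∈ H₁, ∀ x : K, x ≠ 0 → s = t * x ^ 2 → s = t := by
    intro s hs t ht x hx e
    have s0 := hH₁0 s hs
    have t0 := hH₁0 t ht
    refine (hH₁ s s0).unique ⟨hs, 1, one_ne_zero, ?_⟩ ⟨ht, x, hx, ?_⟩
    · rw [div_self s0]; ring
    · rw [e]; field_simp
  refine ⟨fun q a b c d ha _ h => exists_iso h2 H₁ hH₁0 hH₁ q a b c d ha h, ?_⟩
  intro p₁ q₁ a₁ b₁ c₁ d₁ p₂ q₂ a₂ b₂ c₂ d₂ l₁ l₂ hne h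
  obtain ⟨rfl, f₁⟩ := inList_form l₁
  obtain ⟨rfl, f₂⟩ := inList_form l₂
  have no : ∀ a : K, a ∈ H₁ → a = -a → False := by
    intro a ha e
    exact mul_ne_zero h2 (hH₁0 a ha) (by linear_combination e)
  rcases f₁ with hc₁ | ⟨hc₁, m₁, rfl, rfl, ε₁, hε₁, rfl⟩ <;>
  rcases f₂ with hc₂ | ⟨hc₂, m₂, rfl, rfl, ε₂, hε₂, rfl⟩
  · obtain ⟨rfl, rfl, rfl, rfl⟩ := anti_unique h2 H₁ hu hH₁0 hc₁ hc₂ l₁ l₂ h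
    exact hne (by rw [hc₁, hc₂])
  · obtain ⟨x, y, w, -, -, -, -, -, hc, -⟩ := isoS_anti hc₁ (isoS_symm h)
    exact no _ m₂ (by rw [← hc, hc₂])
  · obtain ⟨x, y, w, -, -, -, -, -, hc, -⟩ := isoS_anti hc₂ h
    exact no _ m₁ (by rw [← hc, hc₁])
  · subst hc₁ hc₂
    obtain ⟨rfl, x, hx, e⟩ := comm_case h2 (hH₁0 _ m₁) (hH₁0 _ m₂) hε₁ hε₂ h
    have := hu _ m₁ _ m₂ x hx e
    subst this
    exact hne rfl
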